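/- Let Φ be a real M×N matrix and K ≥ 1, and suppose that for every u ∈ Σ_{2K} and v ∈ Σ_K with ⟨u,v⟩ = 0, |(1/M)·⟨sign(Φu), Φv⟩| ≤ δ3K·‖v‖₂. Let h ∈ ℝ^N, let T ⊆ {1,…,N} with |T| ≤ 2K, and let T₂,…,T_L ⊆ {1,…,N} be pairwise disjoint sets, each disjoint from T and each of cardinality at most K, whose union contains supp(h) \ T. Then ‖Φ h_T‖₁ ≤ ‖Φh‖₁ + M·δ3K·Σ_{k=2}^{L} ‖h_{T_k}‖₂. -/

import Mathlib

/-!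
Put `s = sign (Φ h_T)`, so that `‖Φ h_T‖₁ = ⟨s, Φ h_T⟩`. The sets `T, T₂, …, T_L` are disjoint and
cover `supp h`, hence `h = h_T + ∑ₖ h_{Tₖ}` and
`⟨s, Φ h_T⟩ = ⟨s, Φ h⟩ - ∑ₖ ⟨s, Φ h_{Tₖ}⟩`.
The first term is at most `‖Φ h‖₁` because `|s j| ≤ 1`. Each `h_{Tₖ}` is `K`-sparse and orthogonal to
the `2K`-sparse vector `h_T`, so the hypothesis on `Φ` bounds `|⟨s, Φ h_{Tₖ}⟩|` by
`M * δ3K * ‖h_{Tₖ}‖₂`.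
-/

open Finset MeasureTheory ProbabilityTheory Real

/-- componentwise sign function: 1 if positive, -1 otherwise -/
noncomputable def sgn (t : ℝ) : ℝ := if 0 < t then 1 else -1

/-- ℓ1 norm -/
noncomputable def l1 {m : ℕ} (w : Fin m → ℝ) : ℝ := ∑ j, |w j|

/-- ℓ2 (Euclidean) norm -/
noncomputable def l2 {m : ℕ} (w : Fin m → ℝ) : ℝ := Real.sqrt (∑ j, w j ^ 2)

/-- ℓ0 "norm": number of nonzero entries -/
noncomputable def l0 {m : ℕ} (w : Fin m → ℝ) : ℕ :=
  (Finset.univ.filter fun i => w i ≠ 0).card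

/-- K-sparsity: membership in Σ_K -/
noncomputable def sparse {n : ℕ} (K : ℕ) (u : Fin n → ℝ) : Prop := l0 u ≤ K

/-- Euclidean inner product -/
noncomputable def ip {m : ℕ} (u v : Fin m → ℝ) : ℝ := ∑ j, u j * v j

/-- restriction of a vector to a set of indices (zero outside) -/
noncomputable def restrict {n : ℕ} (u : Fin n → ℝ) (S : Finset (Fin n)) : Fin n → ℝ :=
  fun i => if i ∈ S then u i else 0

/-- `xK` is a best K-term approximation of `x` -/
noncomputable def IsBestKTermApprox {n : ℕ} (K : ℕ) (x xK : Fin n → ℝ) : Prop :=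
  ∃ S : Finset (Fin n), S.card = K ∧ (∀ i ∈ S, xK i = x i) ∧ (∀ i ∉ S, xK i = 0) ∧
    ∀ i ∈ S, ∀ j ∉ S, |x j| ≤ |x i|

lemma sgn_mul_self (t : ℝ) : sgn t * t = |t| := by
  unfold sgn
  split_ifs with ht
  · rw [abs_of_pos ht, one_mul]
  · rw [abs_of_nonpos (not_lt.mp ht)]; ring

lemma sgn_mul_le (t x : ℝ) : sgn t * x ≤ |x| := by
  unfold sgn
  split_ifs
  · simpa using le_abs_self x
  · simpa using neg_le_abs x

lemma sparse_restrict {n K : ℕ} (u : Fin n → ℝ) (S : Finset (Fin n)) (hS : S.card ≤ K) :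
    sparse K (restrict u S) := by
  refine le_trans (Finset.card_le_card fun i hi => ?_) hS
  by_contra hiS
  simp [_root_.restrict, hiS] at hi

lemma ip_restrict_of_disjoint {n : ℕ} (u : Fin n → ℝ) {S T : Finset (Fin n)}
    (hST : Disjoint S T) : ip (restrict u T) (restrict u S) = 0 := by
  refine Finset.sum_eq_zero fun i _ => ?_
  by_cases hi : i ∈ S
  · simp [_root_.restrict, Finset.disjoint_left.mp hST hi]
  · simp [_root_.restrict, hi]

/-- A vector whose support is covered by `T` and the disjoint blocks `P k` is the sum of its
restrictions to them. -/
lemma eq_restrict_add_sum {n : ℕ} (u : Fin n → ℝ) (T : Finset (Fin n)) (I : Finset ℕ)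
    (P : ℕ → Finset (Fin n))
    (hdisj : ∀ k ∈ I, ∀ l ∈ I, k ≠ l → Disjoint (P k) (P l))
    (hdisjT : ∀ k ∈ I, Disjoint (P k) T)
    (hcover : ∀ i, u i ≠ 0 → i ∉ T → ∃ k ∈ I, i ∈ P k) :
    u = restrict u T + ∑ k ∈ I, restrict u (P k) := by
  funext i
  rw [Pi.add_apply, Finset.sum_apply]
  by_cases hiT : i ∈ T
  · rw [Finset.sum_eq_zero fun k hk => ?_]
    · simp [_root_.restrict, hiT]
    · simp [_root_.restrict, Finset.disjoint_right.mp (hdisjT k hk) hiT]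
  · by_cases hi : u i = 0
    · simp [_root_.restrict, hi]
    · obtain ⟨k, hk, hik⟩ := hcover i hi hiT
      rw [Finset.sum_eq_single_of_mem k hk fun l hl hlk => ?_]
      · simp [_root_.restrict, hiT, hik]
      · simp [_root_.restrict, Finset.disjoint_right.mp (hdisj l hl k hk hlk) hik]

theorem l1_restricted_bound
    {M N : ℕ} (Φ : Matrix (Fin M) (Fin N) ℝ) (K : ℕ) (hK : 1 ≤ K) (δ3K : ℝ)
    (hΦ2 : ∀ u v : Fin N → ℝ, sparse (2 * K) u → sparse K v → ip u v = 0 →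
      |(1 / (M : ℝ)) * ip (fun j => sgn (Φ.mulVec u j)) (Φ.mulVec v)| ≤ δ3K * l2 v)
    (h : Fin N → ℝ) (T : Finset (Fin N)) (hT : T.card ≤ 2 * K)
    (L : ℕ) (hL : 2 ≤ L) (Tk : ℕ → Finset (Fin N))
    (hdisj : ∀ k l, 2 ≤ k → k ≤ L → 2 ≤ l → l ≤ L → k ≠ l → Disjoint (Tk k) (Tk l))
    (hdisjT : ∀ k, 2 ≤ k → k ≤ L → Disjoint (Tk k) T)
    (hcard : ∀ k, 2 ≤ k → k ≤ L → (Tk k).card ≤ K)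
    (hcover : ∀ i, h i ≠ 0 → i ∉ T → ∃ k, 2 ≤ k ∧ k ≤ L ∧ i ∈ Tk k) :
    l1 (Φ.mulVec (restrict h T)) ≤
      l1 (Φ.mulVec h) + (M : ℝ) * δ3K * ∑ k ∈ Finset.Icc 2 L, l2 (restrict h (Tk k)) := by
  have hdecomp := eq_restrict_add_sum h T (Finset.Icc 2 L) Tk
    (fun k hk l hl hkl => by
      rw [Finset.mem_Icc] at hk hl
      exact hdisj k l hk.1 hk.2 hl.1 hl.2 hkl)
    (fun k hk => by
      rw [Finset.mem_Icc] at hk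
      exact hdisjT k hk.1 hk.2)
    (fun i hi hiT => by
      obtain ⟨k, hk₁, hk₂, hik⟩ := hcover i hi hiT
      exact ⟨k, Finset.mem_Icc.mpr ⟨hk₁, hk₂⟩, hik⟩)
  set s : Fin M → ℝ := fun j => sgn (Φ.mulVec (restrict h T) j) with hs
  have hsT : l1 (Φ.mulVec (restrict h T)) = ip s (Φ.mulVec (restrict h T)) :=
    Finset.sum_congr rfl fun j _ => (sgn_mul_self _).symm
  have hsh : ip s (Φ.mulVec h) ≤ l1 (Φ.mulVec h) :=
    Finset.sum_le_sum fun j _ => sgn_mul_le _ _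
  have hsplit : ip s (Φ.mulVec h) = ip s (Φ.mulVec (restrict h T)) +
      ∑ k ∈ Finset.Icc 2 L, ip s (Φ.mulVec (restrict h (Tk k))) := by
    change s ⬝ᵥ Φ.mulVec h = s ⬝ᵥ Φ.mulVec (restrict h T) +
      ∑ k ∈ Finset.Icc 2 L, s ⬝ᵥ Φ.mulVec (restrict h (Tk k))
    conv_lhs => rw [hdecomp]
    rw [Matrix.mulVec_add, dotProduct_add, Matrix.mulVec_sum, dotProduct_sum]
  have hblock : ∀ k ∈ Finset.Icc 2 L,
      -ip s (Φ.mulVec (restrict h (Tk k))) ≤ (M : ℝ) * δ3K * l2 (restrict h (Tk k)) := by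
    intro k hk
    rw [Finset.mem_Icc] at hk
    -- For `M = 0` the factor `1 / M` in the hypothesis is junk, but both sides vanish.
    rcases Nat.eq_zero_or_pos M with rfl | hM
    · simp [ip]
    have hb := hΦ2 (restrict h T) (restrict h (Tk k)) (sparse_restrict h T hT)
      (sparse_restrict h _ (hcard k hk.1 hk.2))
      (ip_restrict_of_disjoint h (hdisjT k hk.1 hk.2))
    have hM' : (0 : ℝ) < M := Nat.cast_pos.mpr hM
    have hb' := mul_le_mul_of_nonneg_left ((neg_le_abs _).trans hb) hM'.le
    rw [← hs] at hb'
    calc -ip s (Φ.mulVec (restrict h (Tk k)))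
        = M * -(1 / (M : ℝ) * ip s (Φ.mulVec (restrict h (Tk k)))) := by field_simp
      _ ≤ M * (δ3K * l2 (restrict h (Tk k))) := hb'
      _ = M * δ3K * l2 (restrict h (Tk k)) := by ring
  have hsum := Finset.sum_le_sum hblock
  rw [Finset.sum_neg_distrib, ← Finset.mul_sum] at hsum
  linarith
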